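/- Let S be a numerical semigroup minimally generated by four elements n_1 < n_2 < n_3 < n_4, and for each j let c_j be the least positive integer such that c_j·n_j lies in the submonoid of ℕ generated by {n_l : l ≠ j}. Then for each i ∈ {1,2,3,4}, the set AP(S,n_i) is homogeneous if and only if the set {c_j·n_j : j ≠ i} ∩ AP(S,n_i) is homogeneous. -/

import Mathlib

open scoped BigOperators

/-- The value `Σ aᵢ nᵢ` of a tuple of coefficients `a` w.r.t. the generators `n`. -/
def sval {d : ℕ} (n : Fin d → ℕ) (a : Fin d → ℕ) : ℕ := ∑ i, a i * n i

/-- The total length `Σ aᵢ` of a factorization. -/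
def tlen {d : ℕ} (a : Fin d → ℕ) : ℕ := ∑ i, a i

/-- The submonoid of `ℕ` generated by `n`. -/
def gen {d : ℕ} (n : Fin d → ℕ) : Set ℕ := {s : ℕ | ∃ a : Fin d → ℕ, s = sval n a}

/-- The Apéry set of the semigroup generated by `n` with respect to `s`:
elements `x` of the semigroup such that `x - s` is not in the semigroup. -/
def Apery {d : ℕ} (n : Fin d → ℕ) (s : ℕ) : Set ℕ :=
  {x : ℕ | x ∈ gen n ∧ ¬ ∃ y ∈ gen n, x = s + y}

/-- A subset `T` is homogeneous if every nonzero element of `T` has all its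
factorizations of the same length. -/
def HomogSet {d : ℕ} (n : Fin d → ℕ) (T : Set ℕ) : Prop :=
  ∀ t ∈ T, t ≠ 0 → ∀ a b : Fin d → ℕ, sval n a = t → sval n b = t → tlen a = tlen b

/-- The order of `s`: the maximal length of a factorization of `s`. -/
noncomputable def ordS {d : ℕ} (n : Fin d → ℕ) (s : ℕ) : ℕ :=
  sSup {l : ℕ | ∃ a : Fin d → ℕ, sval n a = s ∧ tlen a = l}

/-- The torsion set of the semigroup generated by `n`, with respect to the
generator of index `i0` (the smallest generator). -/
noncomputable def Torsion {d : ℕ} (n : Fin d → ℕ) (i0 : Fin d) : Set ℕ :=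
  {s : ℕ | s ∈ gen n ∧ ∃ c : ℕ, 0 < c ∧ ordS n s + c < ordS n (s + c * n i0)}

/-- `n` is a minimal system of generators: any expression of a generator as a
nonnegative combination of the generators has total coefficient sum one. -/
def MinGen {d : ℕ} (n : Fin d → ℕ) : Prop :=
  ∀ r : Fin d, ∀ a : Fin d → ℕ, n r = sval n a → tlen a = 1

/-- `n` generates a numerical semigroup (cofinite in `ℕ`). -/
def IsNumerical {d : ℕ} (n : Fin d → ℕ) : Prop := {x : ℕ | x ∉ gen n}.Finite

/-- The monomial `x^a = Π xᵢ^{aᵢ}`. -/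
noncomputable def monom (k : Type*) [CommRing k] {d : ℕ} (a : Fin d → ℕ) :
    MvPolynomial (Fin d) k :=
  ∏ i, (MvPolynomial.X i : MvPolynomial (Fin d) k) ^ a i

/-- The toric ideal `I_S`: kernel of `k[x₁,…,x_d] → k[t]`, `xᵢ ↦ t^{nᵢ}`. -/
noncomputable def toricIdeal (k : Type*) [CommRing k] {d : ℕ} (n : Fin d → ℕ) :
    Ideal (MvPolynomial (Fin d) k) :=
  RingHom.ker (MvPolynomial.aeval (R := k)
    (fun i => (Polynomial.X : Polynomial k) ^ n i)).toRingHom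

/-- `E` is a minimal generating set of the ideal `I`: it spans `I` and no
proper subset spans `I`. -/
def IsMinGenSet {R : Type*} [CommRing R] (I : Ideal R) (E : Set R) : Prop :=
  Ideal.span E = I ∧ ∀ E' : Set R, E' ⊂ E → Ideal.span E' ≠ I

/-- Membership of an integer in the semigroup generated by `n`. -/
def memZ {d : ℕ} (n : Fin d → ℕ) (z : ℤ) : Prop := ∃ x ∈ gen n, (x : ℤ) = z

/-- A numerical semigroup with Frobenius number `F = max (ℤ ∖ S)` is symmetric
if for every integer `z`, `z ∈ S ↔ F - z ∉ S`. -/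
def IsSymmetric {d : ℕ} (n : Fin d → ℕ) : Prop :=
  ∃ F : ℤ, ¬ memZ n F ∧ (∀ z : ℤ, F < z → memZ n z) ∧
    ∀ z : ℤ, memZ n z ↔ ¬ memZ n (F - z)

/-- A numerical semigroup with Frobenius number `F = max (ℤ ∖ S)` is
pseudo-symmetric if `F` is even and for every integer `z`,
`z ∈ S ↔ (z ≠ F/2 ∧ F - z ∉ S)`. -/
def IsPseudoSymmetric {d : ℕ} (n : Fin d → ℕ) : Prop :=
  ∃ F : ℤ, ¬ memZ n F ∧ (∀ z : ℤ, F < z → memZ n z) ∧ F % 2 = 0 ∧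
    ∀ z : ℤ, memZ n z ↔ (z ≠ F / 2 ∧ ¬ memZ n (F - z))

/-- The generators `q·m₁,…,q·m_d, p·n₁,…,p·n_e` of the gluing of two numerical
semigroups. -/
def glueGen {d e : ℕ} (mg : Fin d → ℕ) (ng : Fin e → ℕ) (p q : ℕ) :
    Fin (d + e) → ℕ :=
  Fin.append (fun i => q * mg i) (fun i => p * ng i)

/-!
Join two factorizations of `t` when they have a generator in common, and call `t` a Betti element
when the resulting graph is disconnected. Cancelling a common generator shows by induction on `t`
that the length is constant along edges, so a set closed under taking summands is homogeneous as
soon as its Betti elements are. No factorization of an element of `AP(S, nᵢ)` involves `nᵢ`, which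
leaves three generators. If `t` is not of the form `cⱼ nⱼ`, every component has a factorization
involving two of them, because the relation defining `cⱼ` can be applied to a multiple `m nⱼ` with
`m > cⱼ` without using up `nⱼ`. Two components would therefore require four generators.
-/

section Factorizations

variable {d : ℕ} {n a : Fin d → ℕ} {k : Fin d}

theorem sval_add (n a b : Fin d → ℕ) : sval n (a + b) = sval n a + sval n b := by
  simp [sval, add_mul, Finset.sum_add_distrib]

theorem tlen_add (a b : Fin d → ℕ) : tlen (a + b) = tlen a + tlen b := by
  simp [tlen, Finset.sum_add_distrib]

theorem sval_single (n : Fin d → ℕ) (k : Fin d) (m : ℕ) : sval n (Pi.single k m) = m * n k := by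
  simp [sval, Pi.single_apply]

theorem eq_zero_of_sval_eq_zero (hn : ∀ j, 0 < n j) (ha : sval n a = 0) : a = 0 := by
  funext j
  have hj : a j * n j = 0 := Finset.sum_eq_zero_iff.mp ha j (Finset.mem_univ j)
  exact (Nat.mul_eq_zero.mp hj).resolve_right (hn j).ne'

theorem exists_eq_single_add (hk : a k ≠ 0) : ∃ a' : Fin d → ℕ, a = Pi.single k 1 + a' :=
  exists_add_of_le (update_le_iff.mpr ⟨Nat.one_le_iff_ne_zero.mpr hk, fun l _ => Nat.zero_le (a l)⟩)

/-- The set of indices of the generators that occur in the factorization `a`, as a `Finset` so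
that its elements can be counted. -/
def supp (a : Fin d → ℕ) : Finset (Fin d) := {k | a k ≠ 0}

theorem mem_supp : k ∈ supp a ↔ a k ≠ 0 := by
  simp [supp]

theorem supp_nonempty_of_sval_ne_zero (ha : sval n a ≠ 0) : (supp a).Nonempty := by
  obtain ⟨k, -, hk⟩ := Finset.exists_ne_zero_of_sum_ne_zero ha
  exact ⟨k, mem_supp.mpr (left_ne_zero_of_mul hk)⟩

theorem sval_of_supp_eq_singleton (n : Fin d → ℕ) (ha : supp a = {k}) :
    sval n a = a k * n k := by
  refine Finset.sum_eq_single k (fun l _ hl => ?_) (by simp)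
  have hal : a l = 0 := by simpa [ha, hl] using (mem_supp (a := a) (k := l)).not
  rw [hal, zero_mul]

end Factorizations

section Apery

variable {d : ℕ} {n : Fin d → ℕ}

theorem sval_mem_Apery_of_add {s : ℕ} {a b : Fin d → ℕ} (h : sval n (a + b) ∈ Apery n s) :
    sval n a ∈ Apery n s := by
  refine ⟨⟨a, rfl⟩, ?_⟩
  rintro ⟨-, ⟨u, rfl⟩, hu⟩
  exact h.2 ⟨sval n (u + b), ⟨u + b, rfl⟩, by rw [sval_add, sval_add, hu, add_assoc]⟩

theorem notMem_supp_of_sval_mem_Apery {i : Fin d} {a : Fin d → ℕ}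
    (h : sval n a ∈ Apery n (n i)) : i ∉ supp a := by
  intro hi
  obtain ⟨a', rfl⟩ := exists_eq_single_add (mem_supp.mp hi)
  exact h.2 ⟨sval n a', ⟨a', rfl⟩, by rw [sval_add, sval_single, one_mul]⟩

theorem HomogSet.mono {T U : Set ℕ} (hU : HomogSet n U) (hTU : T ⊆ U) : HomogSet n T :=
  fun t ht => hU t (hTU ht)

end Apery

section Betti

variable {d : ℕ} {n a b : Fin d → ℕ} {t : ℕ}

/-- Adjacency in the graph of factorizations: `a` and `b` factor the same element and have a
generator in common. -/
def ShareGenerator (n a b : Fin d → ℕ) : Prop :=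
  sval n a = sval n b ∧ ¬ Disjoint (supp a) (supp b)

/-- `a` and `b` lie in the same connected component of the graph of factorizations. As
`ShareGenerator n` is symmetric, its reflexive transitive closure is an equivalence relation. -/
def Linked (n a b : Fin d → ℕ) : Prop := Relation.ReflTransGen (ShareGenerator n) a b

/-- `t` is a Betti element of the semigroup generated by `n`: its graph of factorizations is
disconnected. -/
def IsBetti (n : Fin d → ℕ) (t : ℕ) : Prop :=
  ∃ a b : Fin d → ℕ, sval n a = t ∧ sval n b = t ∧ ¬ Linked n a b

theorem ShareGenerator.symm (h : ShareGenerator n a b) : ShareGenerator n b a :=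
  ⟨h.1.symm, fun hba => h.2 hba.symm⟩

theorem Linked.symm (h : Linked n a b) : Linked n b a :=
  Relation.ReflTransGen.mono (fun _ _ => ShareGenerator.symm) _ _ h.swap

theorem Linked.sval_eq (h : Linked n a b) : sval n a = sval n b := by
  induction h with
  | refl => rfl
  | tail _ hbc ih => exact ih.trans hbc.1

theorem disjoint_supp_of_not_linked (hab : sval n a = sval n b) (h : ¬ Linked n a b) :
    Disjoint (supp a) (supp b) :=
  by_contra fun hdisj => h (.single ⟨hab, hdisj⟩)

theorem IsBetti.ne_zero (hn : ∀ j, 0 < n j) (ht : IsBetti n t) : t ≠ 0 := by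
  rintro rfl
  obtain ⟨a, b, ha, hb, hab⟩ := ht
  rw [eq_zero_of_sval_eq_zero hn ha, eq_zero_of_sval_eq_zero hn hb] at hab
  exact hab .refl

theorem ShareGenerator.tlen_eq {T : Set ℕ} (hn : ∀ j, 0 < n j)
    (hT : ∀ a b : Fin d → ℕ, sval n (a + b) ∈ T → sval n a ∈ T)
    (hlt : ∀ a' b' : Fin d → ℕ, sval n a' < sval n a → sval n a' ∈ T →
      sval n a' = sval n b' → tlen a' = tlen b')
    (ha : sval n a ∈ T) (hab : ShareGenerator n a b) : tlen a = tlen b := by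
  obtain ⟨hval, hdisj⟩ := hab
  obtain ⟨k, hka, hkb⟩ := Finset.not_disjoint_iff.mp hdisj
  obtain ⟨a', rfl⟩ := exists_eq_single_add (mem_supp.mp hka)
  obtain ⟨b', rfl⟩ := exists_eq_single_add (mem_supp.mp hkb)
  have hval' : sval n a' = sval n b' := by simpa [sval_add] using hval
  have hlt' : sval n a' < sval n (Pi.single k 1 + a') := by
    simpa [sval_add, sval_single] using hn k
  rw [tlen_add, tlen_add, hlt a' b' hlt' (hT a' _ (add_comm _ a' ▸ ha)) hval']

theorem HomogSet.of_inter_isBetti {T : Set ℕ} (hn : ∀ j, 0 < n j)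
    (hT : ∀ a b : Fin d → ℕ, sval n (a + b) ∈ T → sval n a ∈ T)
    (hB : HomogSet n (T ∩ {t | IsBetti n t})) : HomogSet n T := by
  suffices h : ∀ t ∈ T, ∀ a b : Fin d → ℕ, sval n a = t → sval n b = t → tlen a = tlen b from
    fun t ht _ => h t ht
  intro t
  induction t using Nat.strong_induction_on with
  | _ t ih =>
    intro ht a b ha hb
    by_cases hBt : IsBetti n t
    · exact hB t ⟨ht, hBt⟩ (hBt.ne_zero hn) a b ha hb
    have hab : Linked n a b := by_contra fun hab => hBt ⟨a, b, ha, hb, hab⟩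
    clear hb
    induction hab with
    | refl => rfl
    | @tail b b' hab hbb' hlen =>
      have hb : sval n b = t := (Linked.sval_eq hab).symm.trans ha
      refine hlen.trans (hbb'.tlen_eq hn hT (fun u v hu huT huv => ?_) (hb ▸ ht))
      exact ih _ (hb ▸ hu) huT u v rfl huv.symm

end Betti

section RelationMultipliers

variable {d : ℕ} {n : Fin d → ℕ}

/-- The positive multipliers `m` such that `m · nⱼ` lies in the submonoid generated by the other
generators; the least of them is the constant `cⱼ`. -/
def relationMultipliers (n : Fin d → ℕ) (j : Fin d) : Set ℕ :=
  {m | 0 < m ∧ ∃ a : Fin d → ℕ, a j = 0 ∧ m * n j = sval n a}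

theorem exists_linked_one_lt_card_supp_of_supp_eq_singleton {a b : Fin d → ℕ} {c : ℕ} {j : Fin d}
    (hnj : 0 < n j) (hc : IsLeast (relationMultipliers n j) c) (hab : sval n a = sval n b)
    (ha : supp a = {j}) (hbj : b j = 0) (hne : sval n a ≠ c * n j) :
    ∃ a' : Fin d → ℕ, Linked n a a' ∧ 1 < (supp a').card := by
  obtain ⟨⟨hc_pos, p, hpj, hp⟩, hc_le⟩ := hc
  have hja : j ∈ supp a := by simp [ha]
  have hval : sval n a = a j * n j := sval_of_supp_eq_singleton n ha
  have haj : a j ∈ relationMultipliers n j :=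
    ⟨Nat.pos_of_ne_zero (mem_supp.mp hja), b, hbj, hval ▸ hab⟩
  have hlt : c < a j := lt_of_le_of_ne (hc_le haj) fun h => hne (h ▸ hval)
  obtain ⟨k, hk⟩ : (supp p).Nonempty :=
    supp_nonempty_of_sval_ne_zero (hp ▸ (Nat.mul_pos hc_pos hnj).ne')
  have hkj : k ≠ j := fun h => mem_supp.mp hk (h ▸ hpj)
  let a' : Fin d → ℕ := Pi.single j (a j - c) + p
  have hval' : sval n a = sval n a' := by
    rw [sval_add, sval_single, ← hp, ← add_mul, Nat.sub_add_cancel hlt.le, hval]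
  have hja' : j ∈ supp a' := mem_supp.mpr (by simp [a']; omega)
  have hka' : k ∈ supp a' := mem_supp.mpr (by simpa [a', hkj] using mem_supp.mp hk)
  exact ⟨a', .single ⟨hval', Finset.not_disjoint_iff.mpr ⟨j, hja, hja'⟩⟩,
    Finset.one_lt_card.mpr ⟨k, hka', j, hja', hkj⟩⟩

theorem exists_linked_one_lt_card_supp {a b c : Fin d → ℕ} (hn : ∀ j, 0 < n j)
    (hc : ∀ j ∈ supp a, IsLeast (relationMultipliers n j) (c j)) (ha : sval n a ≠ 0)
    (hab : sval n a = sval n b) (hdisj : Disjoint (supp a) (supp b))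
    (hne : ∀ j ∈ supp a, sval n a ≠ c j * n j) :
    ∃ a' : Fin d → ℕ, Linked n a a' ∧ 1 < (supp a').card := by
  rcases (Finset.one_le_card.mpr (supp_nonempty_of_sval_ne_zero ha)).eq_or_lt with hone | hcard
  · obtain ⟨j, hj⟩ := Finset.card_eq_one.mp hone.symm
    have hja : j ∈ supp a := by simp [hj]
    have hbj : b j = 0 := not_not.mp fun h => Finset.disjoint_left.mp hdisj hja (mem_supp.mpr h)
    exact exists_linked_one_lt_card_supp_of_supp_eq_singleton (hn j) (hc j hja) hab hj hbj
      (hne j hja)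
  · exact ⟨a, .refl, hcard⟩

theorem IsBetti.exists_eq_mul {t : ℕ} {c : Fin d → ℕ} {J : Finset (Fin d)} (hn : ∀ j, 0 < n j)
    (hJ : J.card ≤ 3) (hsupp : ∀ a : Fin d → ℕ, sval n a = t → supp a ⊆ J)
    (hc : ∀ j ∈ J, IsLeast (relationMultipliers n j) (c j)) (ht : IsBetti n t) :
    ∃ j ∈ J, t = c j * n j := by
  have ht0 := ht.ne_zero hn
  obtain ⟨a, b, rfl, hb, hab⟩ := ht
  have hdisj := disjoint_supp_of_not_linked hb.symm hab
  by_contra! hne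
  have haJ := hsupp a rfl
  have hbJ := hsupp b hb
  obtain ⟨a', haa', ha'⟩ := exists_linked_one_lt_card_supp hn (fun j hj => hc j (haJ hj)) ht0
    hb.symm hdisj (fun j hj => hne j (haJ hj))
  obtain ⟨b', hbb', hb'⟩ := exists_linked_one_lt_card_supp hn (fun j hj => hc j (hbJ hj))
    (hb.symm ▸ ht0) hb hdisj.symm (fun j hj => hb.symm ▸ hne j (hbJ hj))
  have hval : sval n b' = sval n a := hbb'.sval_eq.symm.trans hb
  have hdisj' : Disjoint (supp a') (supp b') :=
    disjoint_supp_of_not_linked (haa'.sval_eq.symm.trans hval.symm)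
      fun h => hab (haa'.trans (h.trans hbb'.symm))
  have hsub : supp a' ∪ supp b' ⊆ J :=
    Finset.union_subset (hsupp a' haa'.sval_eq.symm) (hsupp b' hval)
  have hcard := Finset.card_le_card hsub
  rw [Finset.card_union_of_disjoint hdisj'] at hcard
  omega

end RelationMultipliers

theorem statement8_general {d : ℕ} (hd : d ≤ 4) (n : Fin d → ℕ) (hn : ∀ j, 0 < n j) (i : Fin d)
    (c : Fin d → ℕ) (hc : ∀ j ≠ i, IsLeast (relationMultipliers n j) (c j)) :
    HomogSet n (Apery n (n i)) ↔
      HomogSet n ({x : ℕ | ∃ j : Fin d, j ≠ i ∧ x = c j * n j} ∩ Apery n (n i)) := by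
  refine ⟨fun h => h.mono Set.inter_subset_right, fun h => ?_⟩
  refine .of_inter_isBetti hn (fun _ _ => sval_mem_Apery_of_add) (h.mono ?_)
  rintro t ⟨ht, hBetti⟩
  have hcard : (Finset.univ.erase i).card ≤ 3 := by simp; omega
  have hsupp (a : Fin d → ℕ) (ha : sval n a = t) : supp a ⊆ Finset.univ.erase i :=
    Finset.subset_erase.mpr ⟨Finset.subset_univ _, notMem_supp_of_sval_mem_Apery (ha ▸ ht)⟩
  obtain ⟨j, hj, htj⟩ :=
    hBetti.exists_eq_mul hn hcard hsupp fun j hj => hc j (Finset.ne_of_mem_erase hj)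
  exact ⟨⟨j, Finset.ne_of_mem_erase hj, htj⟩, ht⟩

/-- in embedding dimension 4, `AP(S,nᵢ)` is homogeneous iff
`{cⱼ·nⱼ : j ≠ i} ∩ AP(S,nᵢ)` is homogeneous, where `cⱼ` is the least positive
integer with `cⱼ·nⱼ` in the submonoid generated by the other generators. -/
theorem statement8 (n : Fin 4 → ℕ) (hmono : StrictMono n) (hpos : 0 < n 0)
    (hnum : IsNumerical n) (hmin : MinGen n)
    (c : Fin 4 → ℕ)
    (hc : ∀ l : Fin 4, 0 < c l ∧
      (∃ a : Fin 4 → ℕ, a l = 0 ∧ c l * n l = sval n a) ∧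
      (∀ c' : ℕ, 0 < c' → (∃ a : Fin 4 → ℕ, a l = 0 ∧ c' * n l = sval n a) →
        c l ≤ c')) :
    ∀ i : Fin 4, HomogSet n (Apery n (n i)) ↔
      HomogSet n ({x : ℕ | ∃ j : Fin 4, j ≠ i ∧ x = c j * n j} ∩
        Apery n (n i)) := by
  exact fun i => statement8_general le_rfl n
    (fun j => hpos.trans_le (hmono.monotone (Fin.zero_le j))) i c
    fun j _ => ⟨⟨(hc j).1, (hc j).2.1⟩, fun m hm => (hc j).2.2 m hm.1 hm.2⟩
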